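/- Let C₆ be the cycle graph on 6 vertices and let H be the disjoint union of two triangle graphs K₃ (so H also has 6 vertices). Then C₆ is connected, H is disconnected, both graphs are 2-regular, and for every message-passing scheme (any constant initial feature h₀, any functions AGG_t, MERGE_t), every number of iterations T, and every readout function READOUT : Multiset α → γ, the graph-level representations of C₆ and H are equal. Consequently the standard GNN cannot identify connectivity. -/

import Mathlib

/-!
A message-passing scheme sees only multisets of features. On a `d`-regular graph with a constant
initial feature, every vertex receives `d` copies of the same message, so by induction the features
stay constant over the vertices, and their common value depends only on `d` and the scheme
(`gnnFeat_eq_regularFeat`). Hence two regular graphs of the same degree and the same order, such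
as `C₆` and two disjoint triangles, give equal multisets of features
(`map_gnnFeat_eq_of_regular`), although only one of them is connected.
-/

open scoped Classical in
/-- The node features computed by a message-passing scheme (standard GNN) on a finite
simple graph `G`: `h 0 v = h₀` and
`h (t+1) v = MERGE (t+1) (h t v) (AGG (t+1) M_v)`, where `M_v` is the multiset of
features at iteration `t` of the neighbors of `v`. -/
noncomputable def gnnFeat {V α β : Type*} [Fintype V] (G : SimpleGraph V)
    (h₀ : α) (AGG : ℕ → Multiset α → β) (MERGE : ℕ → α → β → α) : ℕ → V → α
  | 0, _ => h₀
  | t + 1, v =>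
      MERGE (t + 1) (gnnFeat G h₀ AGG MERGE t v)
        (AGG (t + 1)
          (((Finset.univ.filter fun u => G.Adj v u)).val.map (gnnFeat G h₀ AGG MERGE t)))

universe u v w

/-- The common feature of all vertices of a `d`-regular graph after `t` iterations, computed
without reference to the graph. -/
def regularFeat {α β : Type*} (d : ℕ) (h₀ : α) (AGG : ℕ → Multiset α → β)
    (MERGE : ℕ → α → β → α) : ℕ → α
  | 0 => h₀
  | t + 1 =>
      MERGE (t + 1) (regularFeat d h₀ AGG MERGE t)
        (AGG (t + 1) (Multiset.replicate d (regularFeat d h₀ AGG MERGE t)))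

theorem gnnFeat_eq_regularFeat {V α β : Type*} [Fintype V] (G : SimpleGraph V)
    [G.LocallyFinite] {d : ℕ} (hG : G.IsRegularOfDegree d)
    (h₀ : α) (AGG : ℕ → Multiset α → β) (MERGE : ℕ → α → β → α) (t : ℕ) (v : V) :
    gnnFeat G h₀ AGG MERGE t v = regularFeat d h₀ AGG MERGE t := by
  classical
  induction t generalizing v with
  | zero => rfl
  | succ t ih =>
    have hcard : (Finset.univ.filter fun u => G.Adj v u).card = d := by
      rw [← hG v, ← SimpleGraph.card_neighborFinset_eq_degree]
      congr 1
      ext u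
      simp
    have hfeat : gnnFeat G h₀ AGG MERGE t = Function.const V (regularFeat d h₀ AGG MERGE t) :=
      funext ih
    simp only [gnnFeat, regularFeat, hfeat, Multiset.map_const, Function.const_apply]
    -- Only the number of neighbors remains to be compared; `congr` closes it with `hcard`.
    congr 3

theorem map_gnnFeat_eq_of_regular {V W α β : Type*} [Fintype V] [Fintype W]
    (G : SimpleGraph V) (G' : SimpleGraph W) [G.LocallyFinite] [G'.LocallyFinite] {d : ℕ}
    (hG : G.IsRegularOfDegree d) (hG' : G'.IsRegularOfDegree d)
    (hcard : Fintype.card V = Fintype.card W)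
    (h₀ : α) (AGG : ℕ → Multiset α → β) (MERGE : ℕ → α → β → α) (T : ℕ) :
    (Finset.univ : Finset V).val.map (gnnFeat G h₀ AGG MERGE T) =
      (Finset.univ : Finset W).val.map (gnnFeat G' h₀ AGG MERGE T) := by
  have hV : gnnFeat G h₀ AGG MERGE T = Function.const V (regularFeat d h₀ AGG MERGE T) :=
    funext (gnnFeat_eq_regularFeat G hG h₀ AGG MERGE T)
  have hW : gnnFeat G' h₀ AGG MERGE T = Function.const W (regularFeat d h₀ AGG MERGE T) :=
    funext (gnnFeat_eq_regularFeat G' hG' h₀ AGG MERGE T)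
  rw [hV, hW, Multiset.map_const, Multiset.map_const]
  exact congrArg (Multiset.replicate · _) hcard

open scoped Classical in
/-- `C₆` (the cycle graph on 6 vertices) is connected, the disjoint union `H` of two
triangles `K₃` is disconnected, both are 2-regular, and every standard GNN (any initial
feature, aggregation/merge functions, number of iterations and readout) assigns them the
same graph-level representation: the standard GNN cannot identify connectivity. -/
theorem gnn_cannot_identify_connectivity :
    let C₆ : SimpleGraph (Fin 6) := SimpleGraph.cycleGraph 6
    let H : SimpleGraph (Fin 3 ⊕ Fin 3) := (⊤ : SimpleGraph (Fin 3)) ⊕g (⊤ : SimpleGraph (Fin 3))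
    C₆.Connected ∧ ¬ H.Connected ∧
    C₆.IsRegularOfDegree 2 ∧ H.IsRegularOfDegree 2 ∧
    ∀ {α : Type u} {β : Type v} {γ : Type w} (h₀ : α) (AGG : ℕ → Multiset α → β) (MERGE : ℕ → α → β → α)
      (T : ℕ) (READOUT : Multiset α → γ),
      READOUT ((Finset.univ : Finset (Fin 6)).val.map (gnnFeat C₆ h₀ AGG MERGE T)) =
        READOUT ((Finset.univ : Finset (Fin 3 ⊕ Fin 3)).val.map (gnnFeat H h₀ AGG MERGE T)) := by
  intro C₆ H
  have hC : C₆.IsRegularOfDegree 2 := by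
    intro v
    convert SimpleGraph.cycleGraph_degree_three_le (n := 3) (v := v)
  have hH : H.IsRegularOfDegree 2 := by
    intro v
    -- Passing to `Set.ncard` of the neighbor set removes the classical decidability instances.
    rw [← SimpleGraph.card_neighborSet_eq_degree, ← Nat.card_eq_fintype_card, Nat.card_coe_set_eq]
    rcases v with v | v
    · rw [SimpleGraph.neighborSet_sum_inl, Set.ncard_image_of_injective _ Sum.inl_injective,
        SimpleGraph.neighborSet_top, Set.ncard_compl]
      simp
    · rw [SimpleGraph.neighborSet_sum_inr, Set.ncard_image_of_injective _ Sum.inr_injective,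
        SimpleGraph.neighborSet_top, Set.ncard_compl]
      simp
  refine ⟨SimpleGraph.cycleGraph_connected, SimpleGraph.not_connected_sum, hC, hH, ?_⟩
  intro α β γ h₀ AGG MERGE T READOUT
  exact congrArg READOUT
    (map_gnnFeat_eq_of_regular C₆ H hC hH (by simp) h₀ AGG MERGE T)
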